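/- Let ℓ be a prime, let A be an ℓ-divisible abelian group such that A[ℓ] is finite, and let t ≥ 0 be an integer. For a subgroup H of A[ℓ^t], let q_H : A → A/H be the quotient homomorphism, let V_ℓ(q_H) : T_ℓA ⊗_Z Q → T_ℓ(A/H) ⊗_Z Q be the induced isomorphism, regard T_ℓ(A/H) as a subgroup of T_ℓ(A/H) ⊗_Z Q via x ↦ x ⊗ 1 (this map is injective since Tate modules are torsion-free), and set Λ(H) := (V_ℓ q_H)^{-1}(T_ℓ(A/H)) ⊆ T_ℓA ⊗_Z Q. Then H ↦ Λ(H) is a bijection from the set of subgroups of A[ℓ^t] onto the set of subgroups L of T_ℓA ⊗_Z Q satisfying T_ℓA ⊆ L ⊆ ℓ^{-t}·T_ℓA, and moreover for subgroups H, H' of A[ℓ^t] one has H ⊆ H' if and only if Λ(H) ⊆ Λ(H'). -/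

import Mathlib

/-- The ℓ-adic Tate module of an abelian group `A`. An element is a sequence `P` with
`P n ∈ A[ℓ^(n+1)]` (so `P 0` plays the role of `P₁ ∈ A[ℓ]`) and `ℓ • P (n+1) = P n`. -/
def TateModule (ℓ : ℕ) (A : Type*) [AddCommGroup A] : AddSubgroup (ℕ → A) where
  carrier := {P | (∀ n, ℓ ^ (n + 1) • P n = 0) ∧ ∀ n, ℓ • P (n + 1) = P n}
  zero_mem' := ⟨fun _ => smul_zero _, fun _ => smul_zero _⟩
  add_mem' := by
    rintro P Q ⟨hP1, hP2⟩ ⟨hQ1, hQ2⟩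
    refine ⟨fun n => ?_, fun n => ?_⟩
    · show ℓ ^ (n + 1) • (P n + Q n) = 0
      rw [smul_add, hP1 n, hQ1 n, add_zero]
    · show ℓ • (P (n + 1) + Q (n + 1)) = P n + Q n
      rw [smul_add, hP2 n, hQ2 n]
  neg_mem' := by
    rintro P ⟨hP1, hP2⟩
    refine ⟨fun n => ?_, fun n => ?_⟩
    · show ℓ ^ (n + 1) • (-(P n)) = 0
      rw [smul_neg, hP1 n, neg_zero]
    · show ℓ • (-(P (n + 1))) = -(P n)
      rw [smul_neg, hP2 n]

/-- The map induced on `ℓ`-adic Tate modules by a homomorphism of abelian groups,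
given by applying it componentwise. -/
def tateMap (ℓ : ℕ) {A B : Type*} [AddCommGroup A] [AddCommGroup B] (φ : A →+ B) :
    TateModule ℓ A →+ TateModule ℓ B where
  toFun P := ⟨fun n => φ (P.1 n),
    fun n => by rw [← map_nsmul, P.2.1 n, map_zero],
    fun n => by rw [← map_nsmul, P.2.2 n]⟩
  map_zero' := Subtype.ext (funext fun _ => map_zero φ)
  map_add' P Q := Subtype.ext (funext fun _ => map_add φ _ _)

/-- The `ℓ`-primary component of an abelian group: elements killed by a power of `ℓ`. -/
def primaryPart (ℓ : ℕ) (H : Type*) [AddCommGroup H] : AddSubgroup H where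
  carrier := {h | ∃ k : ℕ, ℓ ^ k • h = 0}
  zero_mem' := ⟨0, smul_zero _⟩
  add_mem' := by
    rintro a b ⟨j, hj⟩ ⟨k, hk⟩
    refine ⟨j + k, ?_⟩
    have ha : ℓ ^ (j + k) • a = 0 := by
      rw [pow_add, mul_comm, mul_smul, hj, smul_zero]
    have hb : ℓ ^ (j + k) • b = 0 := by
      rw [pow_add, mul_smul, hk, smul_zero]
    rw [smul_add, ha, hb, add_zero]
  neg_mem' := by
    rintro a ⟨k, hk⟩
    exact ⟨k, by rw [smul_neg, hk, neg_zero]⟩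

/-- The additive map `M → M ⊗_ℤ ℚ`, `x ↦ x ⊗ c`. -/
noncomputable def tmulQ {M : Type*} [AddCommGroup M] (c : ℚ) : M →+ TensorProduct ℤ M ℚ where
  toFun x := x ⊗ₜ c
  map_zero' := TensorProduct.zero_tmul _ c
  map_add' x y := TensorProduct.add_tmul x y c

/-- The `m`-torsion subgroup `A[m]` of an abelian group `A`. -/
def torsionSub (m : ℕ) (A : Type*) [AddCommGroup A] : AddSubgroup A where
  carrier := {a | m • a = 0}
  zero_mem' := smul_zero m
  add_mem' := by
    rintro a b (ha : m • a = 0) (hb : m • b = 0)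
    show m • (a + b) = 0
    rw [smul_add, ha, hb, add_zero]
  neg_mem' := by
    rintro a (ha : m • a = 0)
    show m • (-a) = 0
    rw [smul_neg, ha, neg_zero]

/-- The lattice `Λ(H) := (V_ℓ q_H)⁻¹ (T_ℓ(A/H)) ⊆ T_ℓA ⊗_ℤ ℚ` attached to a subgroup
`H ≤ A`, where `q_H : A → A/H` is the quotient map and `T_ℓ(A/H)` is viewed inside
`T_ℓ(A/H) ⊗_ℤ ℚ` via `x ↦ x ⊗ 1`. -/
noncomputable def tateLattice (ℓ : ℕ) (A : Type*) [AddCommGroup A] (H : AddSubgroup A) :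
    AddSubgroup (TensorProduct ℤ (TateModule ℓ A) ℚ) :=
  AddSubgroup.comap
    (LinearMap.rTensor (R := ℤ) ℚ
      (tateMap ℓ (QuotientAddGroup.mk' H)).toIntLinearMap).toAddMonoidHom
    (tmulQ (M := TateModule ℓ (A ⧸ H)) 1).range

/-!
Write `p : T_ℓA → A[ℓ^t]` for the projection and `j : T_ℓA → T_ℓA ⊗ ℚ` for `x ↦ x ⊗ ℓ^{-t}`.
The projection has kernel `ℓ^t T_ℓA`, and it is onto because `ℓ`-power torsion can be divided
by `ℓ`. Applying the computation of the kernel to `A/H`, whose Tate module is torsion-free, gives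
`j⁻¹(Λ(H)) = p⁻¹(H)`; for `H = 0` this reads `j⁻¹(T_ℓA) = ker p`. If `H` is killed by `ℓ^t`,
multiplication by `ℓ^t` factors through `A/H`, which forces `Λ(H)` into the image of `j`. Hence
`Λ(H)` and `H` determine each other, with inverse `L ↦ p(j⁻¹(L))`.
-/

section TensorRat

open TensorProduct

variable {M N : Type*} [AddCommGroup M] [AddCommGroup N]

theorem tmulQ_nsmul (c : ℚ) (n : ℕ) (x : M) : tmulQ c (n • x) = tmulQ (n * c) x := by
  change (n • x) ⊗ₜ[ℤ] c = x ⊗ₜ[ℤ] (n * c)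
  rw [← natCast_zsmul, TensorProduct.smul_tmul, zsmul_eq_mul, Int.cast_natCast]

theorem tmulQ_one_injective [IsAddTorsionFree M] :
    Function.Injective (tmulQ (M := M) 1) :=
  (TensorProduct.comm ℤ ℚ M).injective.comp (Module.Flat.tensorProduct_mk_injective ℤ M ℚ)

theorem tmulQ_inv_mem_range_tmulQ_one_iff [IsAddTorsionFree M] {n : ℕ} (hn : n ≠ 0) (x : M) :
    tmulQ (n : ℚ)⁻¹ x ∈ (tmulQ (M := M) 1).range ↔ ∃ y, n • y = x := by
  have hn' : (n : ℚ) * (n : ℚ)⁻¹ = 1 := mul_inv_cancel₀ (Nat.cast_ne_zero.mpr hn)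
  constructor
  · rintro ⟨y, hy⟩
    refine ⟨y, tmulQ_one_injective ?_⟩
    rw [map_nsmul, hy, ← map_nsmul, tmulQ_nsmul, hn']
  · rintro ⟨y, rfl⟩
    exact ⟨y, by rw [tmulQ_nsmul, hn']⟩

theorem comap_rTensor_range_tmulQ_one_le {f : M →+ N} {g : N →+ M} {n : ℕ} (hn : n ≠ 0)
    (hgf : ∀ x, g (f x) = n • x) :
    (tmulQ (M := N) 1).range.comap (f.toIntLinearMap.rTensor ℚ).toAddMonoidHom ≤
      (tmulQ (M := M) (n : ℚ)⁻¹).range := by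
  rintro v ⟨y, hy : tmulQ 1 y = f.toIntLinearMap.rTensor ℚ v⟩
  let G : N ⊗[ℤ] ℚ →ₗ[ℤ] M ⊗[ℤ] ℚ :=
    TensorProduct.map g.toIntLinearMap (LinearMap.mulLeft ℤ (n : ℚ)⁻¹)
  have hG : G ∘ₗ f.toIntLinearMap.rTensor ℚ = LinearMap.id := by
    refine TensorProduct.ext' fun x c => ?_
    change tmulQ ((n : ℚ)⁻¹ * c) (g (f x)) = tmulQ c x
    rw [hgf, tmulQ_nsmul, mul_inv_cancel_left₀ (Nat.cast_ne_zero.mpr hn)]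
  refine ⟨g y, ?_⟩
  calc tmulQ (n : ℚ)⁻¹ (g y)
      = tmulQ ((n : ℚ)⁻¹ * 1) (g y) := by rw [mul_one]
    _ = G (tmulQ 1 y) := rfl
    _ = G (f.toIntLinearMap.rTensor ℚ v) := by rw [hy]
    _ = v := LinearMap.congr_fun hG v

end TensorRat

namespace TateModule

variable {ℓ : ℕ} {A B : Type*} [AddCommGroup A] [AddCommGroup B]

theorem pow_nsmul_apply_add (x : TateModule ℓ A) (n k : ℕ) : ℓ ^ k • x.1 (n + k) = x.1 n := by
  induction k with
  | zero => simp
  | succ k ih => rw [pow_succ, mul_smul, ← add_assoc, x.2.2, ih]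

theorem eq_zero_of_nsmul_eq_zero {x : TateModule ℓ A} (hx : ℓ • x = 0) : x = 0 :=
  Subtype.ext <| funext fun n => (x.2.2 n).symm.trans (congrFun (congrArg Subtype.val hx) (n + 1))

theorem eq_zero_of_coprime_nsmul_eq_zero {m : ℕ} (hm : m.Coprime ℓ) {x : TateModule ℓ A}
    (hx : m • x = 0) : x = 0 := by
  refine Subtype.ext <| funext fun n => AddMonoid.addOrderOf_eq_one_iff.mp ?_
  have hmn : m • x.1 n = 0 := congrFun (congrArg Subtype.val hx) n
  exact Nat.eq_one_of_dvd_coprimes (hm.pow_right (n + 1))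
    (addOrderOf_dvd_of_nsmul_eq_zero hmn) (addOrderOf_dvd_of_nsmul_eq_zero (x.2.1 n))

theorem eq_zero_of_prime_nsmul_eq_zero {p : ℕ} (hp : p.Prime) {x : TateModule ℓ A}
    (hx : p • x = 0) : x = 0 := by
  by_cases hpℓ : p ∣ ℓ
  · exact eq_zero_of_nsmul_eq_zero <| addOrderOf_dvd_iff_nsmul_eq_zero.mp <|
      (addOrderOf_dvd_of_nsmul_eq_zero hx).trans hpℓ
  · exact eq_zero_of_coprime_nsmul_eq_zero (hp.coprime_iff_not_dvd.mpr hpℓ) hx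

instance isAddTorsionFree : IsAddTorsionFree (TateModule ℓ A) where
  nsmul_right_injective n hn := by
    refine (injective_iff_map_eq_zero (nsmulAddMonoidHom (α := TateModule ℓ A) n)).mpr
      fun x (hx : n • x = 0) => ?_
    induction n using induction_on_primes with
    | zero => exact absurd rfl hn
    | one => rwa [one_smul] at hx
    | prime_mul p m hp ih =>
      rw [mul_smul] at hx
      exact ih (right_ne_zero_of_mul hn) (eq_zero_of_prime_nsmul_eq_zero hp hx)

/-- The projection `T_ℓA → A[ℓ^t]`, with values regarded in `A`. As component `n` of an element
of `TateModule ℓ A` lies in `A[ℓ^(n+1)]`, it is written `ℓ • x.1 t` so as to cover `t = 0`. -/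
def torsionProj (ℓ t : ℕ) (A : Type*) [AddCommGroup A] : TateModule ℓ A →+ A where
  toFun x := ℓ • x.1 t
  map_zero' := smul_zero _
  map_add' _ _ := smul_add _ _ _

theorem torsionProj_tateMap (t : ℕ) (φ : A →+ B) (x : TateModule ℓ A) :
    torsionProj ℓ t B (tateMap ℓ φ x) = φ (torsionProj ℓ t A x) :=
  (map_nsmul φ ℓ (x.1 t)).symm

theorem pow_nsmul_torsionProj (t : ℕ) (x : TateModule ℓ A) :
    ℓ ^ t • torsionProj ℓ t A x = 0 := by
  change ℓ ^ t • ℓ • x.1 t = 0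
  rw [← mul_smul, ← pow_succ, x.2.1]

theorem range_torsionProj_le (t : ℕ) : (torsionProj ℓ t A).range ≤ torsionSub (ℓ ^ t) A := by
  rintro _ ⟨x, rfl⟩
  exact pow_nsmul_torsionProj t x

theorem torsionProj_eq_zero_iff (t : ℕ) (x : TateModule ℓ A) :
    torsionProj ℓ t A x = 0 ↔ ∃ y, ℓ ^ t • y = x := by
  constructor
  · intro (hx : ℓ • x.1 t = 0)
    let y : TateModule ℓ A :=
      ⟨fun n => x.1 (n + t),
        fun n => by simp only [pow_succ', mul_smul, add_comm n t, pow_nsmul_apply_add, hx],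
        fun n => by simp only [add_right_comm n 1 t, x.2.2]⟩
    exact ⟨y, Subtype.ext <| funext fun n => pow_nsmul_apply_add x n t⟩
  · rintro ⟨y, rfl⟩
    rw [map_nsmul, pow_nsmul_torsionProj]

end TateModule

section TateLattice

open TateModule

variable {ℓ : ℕ} {A : Type*} [AddCommGroup A]

theorem mem_primaryPart_of_nsmul_mem {a : A} (ha : ℓ • a ∈ primaryPart ℓ A) :
    a ∈ primaryPart ℓ A := by
  obtain ⟨k, hk⟩ := ha
  exact ⟨k + 1, by rw [pow_succ, mul_smul, hk]⟩

theorem exists_iterated_division (hdiv : ∀ a ∈ primaryPart ℓ A, ∃ b, ℓ • b = a) {a : A}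
    (ha : a ∈ primaryPart ℓ A) :
    ∃ s : ℕ → A, (∀ n, ℓ • s (n + 1) = s n) ∧ ∀ n, ℓ ^ n • s n = a := by
  have hdiv' (b : primaryPart ℓ A) : ∃ c : primaryPart ℓ A, ℓ • (c : A) = b := by
    obtain ⟨c, hc⟩ := hdiv b b.2
    exact ⟨⟨c, mem_primaryPart_of_nsmul_mem (hc ▸ b.2)⟩, hc⟩
  choose d hd using hdiv'
  have hstep (n : ℕ) : ℓ • (d^[n + 1] ⟨a, ha⟩ : A) = d^[n] ⟨a, ha⟩ := by
    rw [Function.iterate_succ_apply', hd]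
  refine ⟨fun n => d^[n] ⟨a, ha⟩, hstep, fun n => ?_⟩
  induction n with
  | zero => exact one_smul ℕ a
  | succ n ih => rw [pow_succ, mul_smul, hstep, ih]

theorem range_torsionProj (hdiv : ∀ a ∈ primaryPart ℓ A, ∃ b, ℓ • b = a) (t : ℕ) :
    (torsionProj ℓ t A).range = torsionSub (ℓ ^ t) A := by
  refine (range_torsionProj_le t).antisymm fun a (ha : ℓ ^ t • a = 0) => ?_
  obtain ⟨s, hs, hsa⟩ := exists_iterated_division hdiv ⟨t, ha⟩
  let x : TateModule ℓ A :=
    ⟨fun n => ℓ ^ t • s (n + 1),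
      fun n => by rw [smul_comm, hsa, ha],
      fun n => by rw [smul_comm, hs]⟩
  refine ⟨x, ?_⟩
  change ℓ • ℓ ^ t • s (t + 1) = a
  rw [← mul_smul, ← pow_succ', hsa]

theorem comap_range_tmulQ_one (hℓ : ℓ ≠ 0) (t : ℕ) :
    (tmulQ (M := TateModule ℓ A) 1).range.comap (tmulQ ((ℓ : ℚ) ^ t)⁻¹) =
      (torsionProj ℓ t A).ker := by
  ext x
  rw [AddSubgroup.mem_comap, AddMonoidHom.mem_ker, torsionProj_eq_zero_iff, ← Nat.cast_pow,
    tmulQ_inv_mem_range_tmulQ_one_iff (pow_ne_zero t hℓ)]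

theorem range_tmulQ_one_le_tateLattice (H : AddSubgroup A) :
    (tmulQ (M := TateModule ℓ A) 1).range ≤ tateLattice ℓ A H := by
  rintro _ ⟨x, rfl⟩
  exact ⟨tateMap ℓ (QuotientAddGroup.mk' H) x, rfl⟩

theorem tateLattice_le_range_tmulQ (hℓ : ℓ ≠ 0) {t : ℕ} {H : AddSubgroup A}
    (hH : H ≤ torsionSub (ℓ ^ t) A) :
    tateLattice ℓ A H ≤ (tmulQ (M := TateModule ℓ A) ((ℓ : ℚ) ^ t)⁻¹).range := by
  let ψ : A ⧸ H →+ A := QuotientAddGroup.lift H (nsmulAddMonoidHom (ℓ ^ t)) hH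
  rw [← Nat.cast_pow]
  exact comap_rTensor_range_tmulQ_one_le (g := tateMap ℓ ψ) (pow_ne_zero t hℓ) fun _ => rfl

theorem comap_tateLattice (hℓ : ℓ ≠ 0) (t : ℕ) (H : AddSubgroup A) :
    (tateLattice ℓ A H).comap (tmulQ ((ℓ : ℚ) ^ t)⁻¹) = H.comap (torsionProj ℓ t A) := by
  ext x
  let q := QuotientAddGroup.mk' H
  calc tmulQ ((ℓ : ℚ) ^ t)⁻¹ x ∈ tateLattice ℓ A H
      ↔ tateMap ℓ q x ∈ (tmulQ 1).range.comap (tmulQ ((ℓ : ℚ) ^ t)⁻¹) := Iff.rfl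
    _ ↔ torsionProj ℓ t (A ⧸ H) (tateMap ℓ q x) = 0 := by
      rw [comap_range_tmulQ_one hℓ, AddMonoidHom.mem_ker]
    _ ↔ torsionProj ℓ t A x ∈ H := by
      rw [torsionProj_tateMap, QuotientAddGroup.mk'_apply, QuotientAddGroup.eq_zero_iff]

theorem tateLattice_le_tateLattice_iff (hℓ : ℓ ≠ 0)
    (hdiv : ∀ a ∈ primaryPart ℓ A, ∃ b, ℓ • b = a) {t : ℕ} {H : AddSubgroup A}
    (hH : H ≤ torsionSub (ℓ ^ t) A) (H' : AddSubgroup A) :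
    tateLattice ℓ A H ≤ tateLattice ℓ A H' ↔ H ≤ H' := by
  rw [← AddSubgroup.comap_le_comap_of_le_range (tateLattice_le_range_tmulQ hℓ hH),
    comap_tateLattice hℓ, comap_tateLattice hℓ,
    AddSubgroup.comap_le_comap_of_le_range (hH.trans_eq (range_torsionProj hdiv t).symm)]

theorem tateLattice_map_torsionProj_comap (hℓ : ℓ ≠ 0) {t : ℕ}
    {L : AddSubgroup (TensorProduct ℤ (TateModule ℓ A) ℚ)}
    (hTL : (tmulQ (M := TateModule ℓ A) 1).range ≤ L)
    (hLT : L ≤ (tmulQ (M := TateModule ℓ A) ((ℓ : ℚ) ^ t)⁻¹).range) :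
    tateLattice ℓ A ((L.comap (tmulQ ((ℓ : ℚ) ^ t)⁻¹)).map (torsionProj ℓ t A)) = L := by
  set j := tmulQ (M := TateModule ℓ A) ((ℓ : ℚ) ^ t)⁻¹
  set H := (L.comap j).map (torsionProj ℓ t A)
  have hH : H ≤ torsionSub (ℓ ^ t) A :=
    (AddSubgroup.map_le_range _ _).trans (range_torsionProj_le t)
  have hker : (torsionProj ℓ t A).ker ≤ L.comap j :=
    (comap_range_tmulQ_one hℓ t).ge.trans (AddSubgroup.comap_mono hTL)
  have hcomap : (tateLattice ℓ A H).comap j = L.comap j :=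
    (comap_tateLattice hℓ t H).trans (AddSubgroup.comap_map_eq_self hker)
  rw [← AddSubgroup.map_comap_eq_self (tateLattice_le_range_tmulQ hℓ hH), hcomap,
    AddSubgroup.map_comap_eq_self hLT]

theorem tateLattice_bijection_general (hℓ : ℓ ≠ 0) (t : ℕ)
    (hdiv : ∀ a ∈ primaryPart ℓ A, ∃ b, ℓ • b = a) :
    Set.BijOn (tateLattice ℓ A)
      {H : AddSubgroup A | H ≤ torsionSub (ℓ ^ t) A}
      {L : AddSubgroup (TensorProduct ℤ (TateModule ℓ A) ℚ) |
        (tmulQ (M := TateModule ℓ A) 1).range ≤ L ∧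
        L ≤ (tmulQ (M := TateModule ℓ A) (((ℓ : ℚ) ^ t)⁻¹)).range} ∧
    ∀ H H' : AddSubgroup A, H ≤ torsionSub (ℓ ^ t) A →
      (H ≤ H' ↔ tateLattice ℓ A H ≤ tateLattice ℓ A H') := by
  have hle {H : AddSubgroup A} (hH : H ≤ torsionSub (ℓ ^ t) A) (H' : AddSubgroup A) :=
    tateLattice_le_tateLattice_iff hℓ hdiv hH H'
  refine ⟨⟨?mapsTo, ?injOn, ?surjOn⟩, fun H H' hH => (hle hH H').symm⟩
  case mapsTo =>
    exact fun H hH => ⟨range_tmulQ_one_le_tateLattice H, tateLattice_le_range_tmulQ hℓ hH⟩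
  case injOn =>
    exact fun H hH H' hH' h => le_antisymm ((hle hH H').mp h.le) ((hle hH' H).mp h.ge)
  case surjOn =>
    rintro L ⟨hTL, hLT⟩
    exact ⟨_, (AddSubgroup.map_le_range _ _).trans (range_torsionProj_le t),
      tateLattice_map_torsionProj_comap hℓ hTL hLT⟩

end TateLattice

/-- Let `A` be an `ℓ`-divisible abelian group with `A[ℓ]` finite and let
`t ≥ 0`. Then `H ↦ Λ(H)` is a bijection from the set of subgroups of `A[ℓ^t]` onto the set
of subgroups `L` of `T_ℓA ⊗_ℤ ℚ` with `T_ℓA ⊆ L ⊆ ℓ^{-t}·T_ℓA`, and for subgroups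
`H, H' ≤ A[ℓ^t]` one has `H ⊆ H'` iff `Λ(H) ⊆ Λ(H')`. -/
theorem tateLattice_bijection (ℓ t : ℕ) (hℓ : ℓ.Prime)
    (A : Type*) [AddCommGroup A]
    (hdiv : ∀ a : A, ∃ b : A, ℓ • b = a) (hfin : Finite (torsionSub ℓ A)) :
    Set.BijOn (tateLattice ℓ A)
      {H : AddSubgroup A | H ≤ torsionSub (ℓ ^ t) A}
      {L : AddSubgroup (TensorProduct ℤ (TateModule ℓ A) ℚ) |
        (tmulQ (M := TateModule ℓ A) 1).range ≤ L ∧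
        L ≤ (tmulQ (M := TateModule ℓ A) (((ℓ : ℚ) ^ t)⁻¹)).range} ∧
    ∀ H H' : AddSubgroup A, H ≤ torsionSub (ℓ ^ t) A → H' ≤ torsionSub (ℓ ^ t) A →
      (H ≤ H' ↔ tateLattice ℓ A H ≤ tateLattice ℓ A H') := by
  have ⟨hbij, hle⟩ := tateLattice_bijection_general hℓ.ne_zero t fun a _ => hdiv a
  exact ⟨hbij, fun H H' hH _ => hle H H' hH⟩
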